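/- (Existence of a Lyapunov function for the observer error dynamics.) Let θ ≥ 0, let Σ : ℝ² → M₂(ℝ) be continuous and satisfy Assumption 2, suppose Assumption 1 holds with constant ω > 0, and let Ā₁ ∈ M₂(ℝ) be Hurwitz (every eigenvalue has negative real part). Then there exist a symmetric positive definite matrix P ∈ M₂(ℝ) and constants φ, ρ > 0, independent of the input, with the following property: for every T > 0, every continuous v : [0,T] → ℝ², every X̃ ∈ C¹([0,T]; ℝ²), and every C¹ function z̃ : [0,1]×[0,T] → ℝ² satisfying X̃′(t) = Ā₁X̃(t) + G₁(𝒦₁ z̃(·,t)), ∂z̃/∂t(ξ,t) + Λ ∂z̃/∂ξ(ξ,t) = θ Σ(v(t))[z̃(ξ,t) + (𝒦₂ z̃(·,t))] + (𝒦₃ z̃(·,t)) on (0,1)×(0,T), and z̃(0,t) = 0, the function V₀(t) := (1/2)X̃(t)ᵀPX̃(t) + (φ/2)∫₀¹ z̃(ξ,t)ᵀQ(ξ)z̃(ξ,t) dξ satisfies V₀′(t) ≤ −ρ V₀(t) for all t ∈ (0,T). -/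

import Mathlib

open MeasureTheory Matrix Set

noncomputable section

attribute [local instance] Matrix.normedAddCommGroup Matrix.normedSpace

abbrev Vec2 := Fin 2 → ℝ
abbrev Mat2 := Matrix (Fin 2) (Fin 2) ℝ

/-- Nondimensional pressure distribution `p̄(ξ) = (a/(1-e^{-a})) e^{-aξ}`. -/
def pbar (a ξ : ℝ) : ℝ := a / (1 - Real.exp (-a)) * Real.exp (-a * ξ)

/-- The physical parameters of the single-track tire model. -/
structure TireParams where
  vx : ℝ
  L1 : ℝ
  L2 : ℝ
  Fz1 : ℝ
  Fz2 : ℝ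
  σ1 : ℝ
  σ2 : ℝ
  a1 : ℝ
  a2 : ℝ
  φ1 : ℝ
  φ2 : ℝ
  vx_pos : 0 < vx
  L1_pos : 0 < L1
  L2_pos : 0 < L2
  Fz1_pos : 0 < Fz1
  Fz2_pos : 0 < Fz2
  σ1_pos : 0 < σ1
  σ2_pos : 0 < σ2
  a1_pos : 0 < a1
  a2_pos : 0 < a2
  φ1_mem : φ1 ∈ Set.Ioc (0:ℝ) 1
  φ2_mem : φ2 ∈ Set.Ioc (0:ℝ) 1

namespace TireParams

variable (P : TireParams)

def ψ1 : ℝ := 1 - P.φ1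
def ψ2 : ℝ := 1 - P.φ2

def Λmat : Mat2 := Matrix.diagonal ![P.vx / P.L1, P.vx / P.L2]

def Hmat : Mat2 := (2:ℝ) • Matrix.diagonal ![P.φ1, P.φ2]

def K1 (ξ : ℝ) : Mat2 :=
  Matrix.diagonal ![P.Fz1 * P.σ1 * pbar P.a1 ξ, P.Fz2 * P.σ2 * pbar P.a2 ξ]

def K2 (ξ : ℝ) : Mat2 :=
  -Matrix.diagonal ![P.ψ1 * pbar P.a1 ξ, P.ψ2 * pbar P.a2 ξ]

def K3 (ξ : ℝ) : Mat2 :=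
  -P.vx • Matrix.diagonal ![P.ψ1 / P.L1 * deriv (pbar P.a1) ξ, P.ψ2 / P.L2 * deriv (pbar P.a2) ξ]

def K4 : Mat2 :=
  P.vx • Matrix.diagonal ![P.ψ1 / P.L1 * pbar P.a1 1, P.ψ2 / P.L2 * pbar P.a2 1]

def Q (ξ : ℝ) : Mat2 := P.K1 ξ * (P.Hmat)⁻¹

/-- `(𝒦ζ) = ∫₀¹ K(ξ) ζ(ξ) dξ`. -/
def Kop (K : ℝ → Mat2) (ζ : ℝ → Vec2) : Vec2 := ∫ ξ in (0:ℝ)..1, (K ξ).mulVec (ζ ξ)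

def K1op (ζ : ℝ → Vec2) : Vec2 := Kop P.K1 ζ

def K2op (ζ : ℝ → Vec2) : Vec2 := Kop P.K2 ζ

/-- `(𝒦₃ζ) = ∫₀¹ K₃(ξ)ζ(ξ)dξ + K₄ ζ(1)`. -/
def K3op (ζ : ℝ → Vec2) : Vec2 := Kop P.K3 ζ + (P.K4).mulVec (ζ 1)

/-- `(𝒜ζ)(ξ) = -Λ ζ'(ξ) + (𝒦₃ζ)`, expressed through a given derivative `ζ'`. -/
def Aop (ζ ζ' : ℝ → Vec2) (ξ : ℝ) : Vec2 := -(P.Λmat).mulVec (ζ' ξ) + P.K3op ζ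

end TireParams

/-- `ζ` is C¹ on `[0,1]` with derivative `ζ'`. -/
def IsC1On01 (ζ ζ' : ℝ → Vec2) : Prop :=
  (∀ ξ ∈ Icc (0:ℝ) 1, HasDerivWithinAt ζ (ζ' ξ) (Icc (0:ℝ) 1) ξ) ∧
    ContinuousOn ζ' (Icc (0:ℝ) 1)

/-- Square integrability on `(0,1)`. -/
def SqIntegrableOn01 (ζ : ℝ → Vec2) : Prop :=
  Measurable ζ ∧ IntervalIntegrable (fun ξ => ∑ i, (ζ ξ i) ^ 2) volume 0 1

/-- Assumption 1 (strict dissipativity of `𝒜`). -/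
def Assumption1 (P : TireParams) (ω : ℝ) : Prop :=
  ∀ ζ ζ' : ℝ → Vec2, IsC1On01 ζ ζ' → ζ 0 = 0 →
    (∫ ξ in (0:ℝ)..1, P.Aop ζ ζ' ξ ⬝ᵥ (P.Q ξ).mulVec (ζ ξ)) ≤
      -ω * ∫ ξ in (0:ℝ)..1, ∑ i, (ζ ξ i) ^ 2

/-- Assumption 2 (dissipativity of the source `Σ`). -/
def Assumption2 (P : TireParams) (S : Vec2 → Mat2) : Prop :=
  ∀ y : Vec2, ∀ ζ : ℝ → Vec2, SqIntegrableOn01 ζ →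
    (∫ ξ in (0:ℝ)..1, ζ ξ ⬝ᵥ (P.Q ξ).mulVec ((S y).mulVec (ζ ξ + P.K2op ζ))) ≤ 0

def G1mat (m Iz l1 l2 : ℝ) : Mat2 := -!![1/m, 1/m; l1/Iz, -l2/Iz]

/-- A real 2×2 matrix is Hurwitz if every (complex) eigenvalue has negative real part. -/
def IsHurwitz (A : Mat2) : Prop :=
  ∀ μ : ℂ, μ ∈ spectrum ℂ (A.map (algebraMap ℝ ℂ)) → μ.re < 0

/-- `z̃` (with partial derivatives `zξ`, `zt`) is a classical solution on `[0,T]` of the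
(unforced) observer-error tire PDE `∂z̃/∂t + Λ∂z̃/∂ξ = θΣ(v(t))[z̃ + 𝒦₂z̃] + 𝒦₃z̃`, `z̃(0,t)=0`. -/
def IsErrorPDESol (P : TireParams) (θ : ℝ) (S : Vec2 → Mat2) (T : ℝ)
    (v : ℝ → Vec2) (z zξ zt : ℝ → ℝ → Vec2) : Prop :=
  (∀ t ∈ Icc (0:ℝ) T, ∀ ξ ∈ Icc (0:ℝ) 1,
      HasDerivWithinAt (fun s => z s t) (zξ ξ t) (Icc (0:ℝ) 1) ξ) ∧
  (∀ ξ ∈ Icc (0:ℝ) 1, ∀ t ∈ Icc (0:ℝ) T,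
      HasDerivWithinAt (fun s => z ξ s) (zt ξ t) (Icc (0:ℝ) T) t) ∧
  ContinuousOn (fun p : ℝ × ℝ => z p.1 p.2) (Icc (0:ℝ) 1 ×ˢ Icc (0:ℝ) T) ∧
  ContinuousOn (fun p : ℝ × ℝ => zξ p.1 p.2) (Icc (0:ℝ) 1 ×ˢ Icc (0:ℝ) T) ∧
  ContinuousOn (fun p : ℝ × ℝ => zt p.1 p.2) (Icc (0:ℝ) 1 ×ˢ Icc (0:ℝ) T) ∧
  (∀ ξ ∈ Ioo (0:ℝ) 1, ∀ t ∈ Ioo (0:ℝ) T,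
      zt ξ t + (P.Λmat).mulVec (zξ ξ t) =
        θ • (S (v t)).mulVec (z ξ t + P.K2op (fun s => z s t)) + P.K3op (fun s => z s t)) ∧
  (∀ t ∈ Icc (0:ℝ) T, z 0 t = 0)

/-!
Since `A + adj A = tr(A) I` for a `2 × 2` matrix, `P = det(A) I + adj(A)ᵀ adj(A)` solves
`Aᵀ P + P A = 2 tr(A) det(A) I`. If `A` is Hurwitz, then `tr A < 0 < det A`, so `P` is positive
definite and `½ X̃ᵀ P X̃` decays along the lumped error dynamics up to a forcing term `β ‖𝒦₁ z̃‖²`,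
which Jensen's inequality bounds by a multiple of `∫₀¹ ‖z̃‖²`.

The two assumptions give `d/dt ½ ∫₀¹ z̃ᵀ Q z̃ ≤ -ω ∫₀¹ ‖z̃‖²`, so a large enough weight `φ` on this
energy absorbs the forcing term. Both quadratic forms being bounded above by the corresponding
squared norms, the remaining dissipation dominates a multiple of `V₀`.
-/

section QuadraticForms

variable {m n : Type*} [Fintype m] [Fintype n]

lemma dotProduct_self_nonneg {R : Type*} [Ring R] [LinearOrder R] [IsStrictOrderedRing R]
    (x : n → R) : 0 ≤ x ⬝ᵥ x :=
  Finset.sum_nonneg fun i _ => mul_self_nonneg (x i)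

lemma dotProduct_le_mul_add_inv_mul {R : Type*} [Field R] [LinearOrder R]
    [IsStrictOrderedRing R] {ε : R} (hε : 0 < ε) (x y : n → R) :
    x ⬝ᵥ y ≤ ε * (x ⬝ᵥ x) + (4 * ε)⁻¹ * (y ⬝ᵥ y) := by
  simp only [dotProduct, Finset.mul_sum, ← Finset.sum_add_distrib]
  refine Finset.sum_le_sum fun i _ => ?_
  have hsq : ε * (x i * x i) + (4 * ε)⁻¹ * (y i * y i) - x i * y i =
      (4 * ε)⁻¹ * (2 * ε * x i - y i) ^ 2 := by
    field_simp
    ring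
  have : 0 ≤ (4 * ε)⁻¹ * (2 * ε * x i - y i) ^ 2 := by positivity
  linarith

/-- The squared Frobenius norm of a real matrix. It is not taken from a norm instance because
matrices carry the sup norm here. -/
def frobeniusSq (M : Matrix m n ℝ) : ℝ := ∑ i, ∑ j, M i j ^ 2

lemma frobeniusSq_nonneg (M : Matrix m n ℝ) : 0 ≤ frobeniusSq M :=
  Finset.sum_nonneg fun _ _ => Finset.sum_nonneg fun _ _ => sq_nonneg _

lemma mulVec_dotProduct_mulVec_le (M : Matrix m n ℝ) (x : n → ℝ) :
    M *ᵥ x ⬝ᵥ M *ᵥ x ≤ frobeniusSq M * (x ⬝ᵥ x) := by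
  simp only [dotProduct, mulVec, frobeniusSq, Finset.sum_mul, ← sq]
  refine Finset.sum_le_sum fun i _ => ?_
  rw [← Finset.sum_mul]
  exact Finset.sum_mul_sq_le_sq_mul_sq _ _ _

lemma dotProduct_mulVec_self_le (M : Matrix n n ℝ) (x : n → ℝ) :
    x ⬝ᵥ M *ᵥ x ≤ (1 + frobeniusSq M) * (x ⬝ᵥ x) := by
  have hyoung := dotProduct_le_mul_add_inv_mul one_pos x (M *ᵥ x)
  have hM := mulVec_dotProduct_mulVec_le M x
  have := mul_nonneg (frobeniusSq_nonneg M) (dotProduct_self_nonneg x)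
  linarith

lemma exists_forall_frobeniusSq_le {X : Type*} [TopologicalSpace X] {s : Set X}
    (hs : IsCompact s) {K : X → Matrix m n ℝ} (hK : ContinuousOn K s) :
    ∃ C, 0 < C ∧ ∀ ξ ∈ s, frobeniusSq (K ξ) ≤ C := by
  have hcont : Continuous (frobeniusSq : Matrix m n ℝ → ℝ) := by
    unfold frobeniusSq
    fun_prop
  obtain ⟨C, hC⟩ := (hs.image_of_continuousOn (hcont.comp_continuousOn hK)).bddAbove
  exact ⟨max C 1, by positivity, fun ξ hξ =>
    (hC (mem_image_of_mem _ hξ)).trans (le_max_left _ _)⟩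

lemma dotProduct_mulVec_comm_of_isSymm {R : Type*} [CommSemiring R] {M : Matrix n n R}
    (hM : M.IsSymm) (x y : n → R) :
    x ⬝ᵥ M *ᵥ y = y ⬝ᵥ M *ᵥ x := by
  rw [dotProduct_mulVec, ← mulVec_transpose, hM.eq, dotProduct_comm]

lemma hasDerivAt_dotProduct_mulVec_self {M : Matrix n n ℝ} (hM : M.IsSymm) {X : ℝ → n → ℝ}
    {X' : n → ℝ} {t : ℝ} (hX : HasDerivAt X X' t) :
    HasDerivAt (fun τ => X τ ⬝ᵥ M *ᵥ X τ) (2 * (X' ⬝ᵥ M *ᵥ X t)) t := by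
  have hMX : HasDerivAt (fun τ => M *ᵥ X τ) (M *ᵥ X') t :=
    M.mulVecLin.toContinuousLinearMap.hasFDerivAt.comp_hasDerivAt t hX
  have hsum : HasDerivAt (fun τ => X τ ⬝ᵥ M *ᵥ X τ) (X' ⬝ᵥ M *ᵥ X t + X t ⬝ᵥ M *ᵥ X') t := by
    simp only [dotProduct, ← Finset.sum_add_distrib]
    exact HasDerivAt.fun_sum fun i _ => (hasDerivAt_pi.1 hX i).mul (hasDerivAt_pi.1 hMX i)
  rwa [dotProduct_mulVec_comm_of_isSymm hM (X t), ← two_mul] at hsum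

lemma continuousOn_dotProduct_mulVec {X : Type*} [TopologicalSpace X] {s : Set X}
    {x : X → m → ℝ} {M : X → Matrix m n ℝ} {y : X → n → ℝ} (hx : ContinuousOn x s)
    (hM : ContinuousOn M s) (hy : ContinuousOn y s) :
    ContinuousOn (fun ξ => x ξ ⬝ᵥ M ξ *ᵥ y ξ) s :=
  (by fun_prop : Continuous fun p : (m → ℝ) × Matrix m n ℝ × (n → ℝ) =>
    p.1 ⬝ᵥ p.2.1 *ᵥ p.2.2).comp_continuousOn (hx.prodMk (hM.prodMk hy))

end QuadraticForms

section IntegralEstimates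

variable {m n : Type*} [Fintype m] [Fintype n]

lemma convexOn_dotProduct_self : ConvexOn ℝ univ fun x : n → ℝ => x ⬝ᵥ x := by
  refine ⟨convex_univ, fun x _ y _ a b ha hb hab => ?_⟩
  obtain rfl : b = 1 - a := by linarith
  have hgap : a * (x ⬝ᵥ x) + (1 - a) * (y ⬝ᵥ y) -
      (a • x + (1 - a) • y) ⬝ᵥ (a • x + (1 - a) • y) =
      a * (1 - a) * ((x - y) ⬝ᵥ (x - y)) := by
    simp only [add_dotProduct, dotProduct_add, smul_dotProduct, dotProduct_smul, sub_dotProduct,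
      dotProduct_sub, smul_eq_mul, dotProduct_comm y x]
    ring
  have := mul_nonneg (mul_nonneg ha hb) (dotProduct_self_nonneg (x - y))
  simp only [smul_eq_mul]
  linarith

lemma integral_dotProduct_self_le {Ω : Type*} [MeasurableSpace Ω] {μ : Measure Ω}
    [IsProbabilityMeasure μ] {f : Ω → n → ℝ} (hf : Integrable f μ)
    (hf2 : Integrable (fun ω => f ω ⬝ᵥ f ω) μ) :
    (∫ ω, f ω ∂μ) ⬝ᵥ (∫ ω, f ω ∂μ) ≤ ∫ ω, f ω ⬝ᵥ f ω ∂μ :=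
  convexOn_dotProduct_self.map_integral_le (g := fun x => x ⬝ᵥ x) (by fun_prop) isClosed_univ
    (Filter.Eventually.of_forall fun _ => mem_univ _) hf hf2

lemma intervalIntegral_dotProduct_self_le {f : ℝ → n → ℝ} (hf : ContinuousOn f (Icc 0 1)) :
    (∫ ξ in (0 : ℝ)..1, f ξ) ⬝ᵥ (∫ ξ in (0 : ℝ)..1, f ξ) ≤ ∫ ξ in (0 : ℝ)..1, f ξ ⬝ᵥ f ξ := by
  have : IsProbabilityMeasure (volume.restrict (Ioc (0 : ℝ) 1)) := ⟨by simp⟩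
  have hf2 : ContinuousOn (fun ξ => f ξ ⬝ᵥ f ξ) (Icc 0 1) :=
    (by fun_prop : Continuous fun x : n → ℝ => x ⬝ᵥ x).comp_continuousOn hf
  simp only [intervalIntegral.integral_of_le zero_le_one]
  exact integral_dotProduct_self_le (hf.integrableOn_Icc.mono_set Ioc_subset_Icc_self)
    (hf2.integrableOn_Icc.mono_set Ioc_subset_Icc_self)

lemma exists_integral_mulVec_dotProduct_self_le {K : ℝ → Matrix m n ℝ}
    (hK : ContinuousOn K (Icc 0 1)) :
    ∃ C, ∀ ζ : ℝ → n → ℝ, ContinuousOn ζ (Icc 0 1) →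
      (∫ ξ in (0 : ℝ)..1, K ξ *ᵥ ζ ξ) ⬝ᵥ (∫ ξ in (0 : ℝ)..1, K ξ *ᵥ ζ ξ) ≤
        C * ∫ ξ in (0 : ℝ)..1, ζ ξ ⬝ᵥ ζ ξ := by
  obtain ⟨C, -, hKC⟩ := exists_forall_frobeniusSq_le isCompact_Icc hK
  refine ⟨C, fun ζ hζ => ?_⟩
  have hself : Continuous fun x : n → ℝ => x ⬝ᵥ x := by fun_prop
  have hself' : Continuous fun x : m → ℝ => x ⬝ᵥ x := by fun_prop
  have hKζ : ContinuousOn (fun ξ => K ξ *ᵥ ζ ξ) (Icc 0 1) :=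
    (by fun_prop : Continuous fun p : Matrix m n ℝ × (n → ℝ) => p.1 *ᵥ p.2).comp_continuousOn
      (hK.prodMk hζ)
  refine (intervalIntegral_dotProduct_self_le hKζ).trans ?_
  rw [← intervalIntegral.integral_const_mul]
  refine intervalIntegral.integral_mono_on zero_le_one
    ((hself'.comp_continuousOn hKζ).intervalIntegrable_of_Icc zero_le_one)
    ((continuousOn_const.mul (hself.comp_continuousOn hζ)).intervalIntegrable_of_Icc zero_le_one)
    fun ξ hξ => (mulVec_dotProduct_mulVec_le (K ξ) (ζ ξ)).trans ?_
  exact mul_le_mul_of_nonneg_right (hKC ξ hξ) (dotProduct_self_nonneg _)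

lemma exists_integral_dotProduct_mulVec_self_le {a b : ℝ} (hab : a ≤ b)
    {Q : ℝ → Matrix n n ℝ} (hQ : ContinuousOn Q (Icc a b)) :
    ∃ C, 0 < C ∧ ∀ ζ : ℝ → n → ℝ, ContinuousOn ζ (Icc a b) →
      (∫ ξ in a..b, ζ ξ ⬝ᵥ Q ξ *ᵥ ζ ξ) ≤ C * ∫ ξ in a..b, ζ ξ ⬝ᵥ ζ ξ := by
  obtain ⟨C, hC, hQC⟩ := exists_forall_frobeniusSq_le isCompact_Icc hQ
  refine ⟨1 + C, by positivity, fun ζ hζ => ?_⟩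
  have hself : Continuous fun x : n → ℝ => x ⬝ᵥ x := by fun_prop
  rw [← intervalIntegral.integral_const_mul]
  refine intervalIntegral.integral_mono_on hab
    ((continuousOn_dotProduct_mulVec hζ hQ hζ).intervalIntegrable_of_Icc hab)
    ((continuousOn_const.mul (hself.comp_continuousOn hζ)).intervalIntegrable_of_Icc hab)
    fun ξ hξ => (dotProduct_mulVec_self_le (Q ξ) (ζ ξ)).trans ?_
  have := dotProduct_self_nonneg (ζ ξ)
  gcongr
  exact hQC ξ hξ

lemma hasDerivAt_intervalIntegral_of_continuousOn {E : Type*} [NormedAddCommGroup E]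
    [NormedSpace ℝ E] {a b t : ℝ} {U : Set ℝ} (hU : U ∈ nhds t) {F F' : ℝ → ℝ → E}
    (hF : ∀ τ ∈ U, ContinuousOn (fun ξ => F ξ τ) (uIcc a b))
    (hF' : ContinuousOn (fun p : ℝ × ℝ => F' p.1 p.2) (uIcc a b ×ˢ U))
    (hderiv : ∀ ξ ∈ uIcc a b, ∀ τ ∈ U, HasDerivAt (F ξ) (F' ξ τ) τ) :
    HasDerivAt (fun τ => ∫ ξ in a..b, F ξ τ) (∫ ξ in a..b, F' ξ t) t := by
  obtain ⟨r, hr, hrU⟩ := Metric.nhds_basis_closedBall.mem_iff.1 hU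
  have hF't : ContinuousOn (fun ξ => F' ξ t) (uIcc a b) :=
    hF'.comp (f := fun ξ => (ξ, t)) (by fun_prop) fun ξ hξ => ⟨hξ, mem_of_mem_nhds hU⟩
  obtain ⟨B, hB⟩ := (isCompact_uIcc.prod (isCompact_closedBall t r)).exists_bound_of_continuousOn
    (hF'.mono (prod_mono_right hrU))
  refine (intervalIntegral.hasDerivAt_integral_of_dominated_loc_of_deriv_le
    (F := fun τ ξ => F ξ τ) (F' := fun τ ξ => F' ξ τ) (bound := fun _ => B)
    (Metric.closedBall_mem_nhds t hr) ?_ (hF t (mem_of_mem_nhds hU)).intervalIntegrable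
    hF't.intervalIntegrable.def'.aestronglyMeasurable ?_ intervalIntegrable_const ?_).2
  · filter_upwards [hU] with τ hτ
    exact (hF τ hτ).intervalIntegrable.def'.aestronglyMeasurable
  · exact Filter.Eventually.of_forall fun ξ hξ τ hτ => hB (ξ, τ) ⟨uIoc_subset_uIcc hξ, hτ⟩
  · exact Filter.Eventually.of_forall fun ξ hξ τ hτ =>
      hderiv ξ (uIoc_subset_uIcc hξ) τ (hrU hτ)

lemma hasDerivAt_integral_dotProduct_mulVec_self {a b t : ℝ} {U : Set ℝ} (hU : U ∈ nhds t)
    {Q : ℝ → Matrix n n ℝ} (hQ : ContinuousOn Q (uIcc a b)) (hQsymm : ∀ ξ ∈ uIcc a b, (Q ξ).IsSymm)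
    {z z' : ℝ → ℝ → n → ℝ}
    (hz : ContinuousOn (fun p : ℝ × ℝ => z p.1 p.2) (uIcc a b ×ˢ U))
    (hz' : ContinuousOn (fun p : ℝ × ℝ => z' p.1 p.2) (uIcc a b ×ˢ U))
    (hderiv : ∀ ξ ∈ uIcc a b, ∀ τ ∈ U, HasDerivAt (z ξ) (z' ξ τ) τ) :
    HasDerivAt (fun τ => ∫ ξ in a..b, z ξ τ ⬝ᵥ Q ξ *ᵥ z ξ τ)
      (2 * ∫ ξ in a..b, z' ξ t ⬝ᵥ Q ξ *ᵥ z ξ t) t := by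
  have hQfst : ContinuousOn (fun p : ℝ × ℝ => Q p.1) (uIcc a b ×ˢ U) :=
    hQ.comp continuousOn_fst fun p hp => hp.1
  rw [← intervalIntegral.integral_const_mul]
  refine hasDerivAt_intervalIntegral_of_continuousOn hU (fun τ hτ => ?_)
    (continuousOn_const.mul (continuousOn_dotProduct_mulVec hz' hQfst hz))
    fun ξ hξ τ hτ => hasDerivAt_dotProduct_mulVec_self (hQsymm ξ hξ) (hderiv ξ hξ τ hτ)
  have hzτ : ContinuousOn (fun ξ => z ξ τ) (uIcc a b) :=
    hz.comp (f := fun ξ => (ξ, τ)) (by fun_prop) fun ξ hξ => ⟨hξ, hτ⟩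
  exact continuousOn_dotProduct_mulVec hzτ hQ hzτ

end IntegralEstimates

section LyapunovEquation

/-- The explicit solution `P = det(A) I + adj(A)ᵀ adj(A)` of the Lyapunov equation
`Aᵀ P + P A = 2 tr(A) det(A) I` of a `2 × 2` matrix. -/
def lyapunovMatrix {R : Type*} [CommRing R] (A : Matrix (Fin 2) (Fin 2) R) :
    Matrix (Fin 2) (Fin 2) R :=
  A.det • 1 + A.adjugateᵀ * A.adjugate

lemma transpose_mul_lyapunovMatrix_add {R : Type*} [CommRing R] (A : Matrix (Fin 2) (Fin 2) R) :
    Aᵀ * lyapunovMatrix A + lyapunovMatrix A * A = (2 * A.trace * A.det) • 1 := by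
  have hadj : A + A.adjugate = A.trace • 1 := by
    ext i j
    fin_cases i <;> fin_cases j <;> simp [adjugate_fin_two, trace_fin_two, add_comm]
  have hadjT : Aᵀ + A.adjugateᵀ = A.trace • 1 := by
    rw [← transpose_add, hadj, transpose_smul, transpose_one]
  calc Aᵀ * lyapunovMatrix A + lyapunovMatrix A * A
      = A.det • ((A + A.adjugate) + (Aᵀ + A.adjugateᵀ)) := by
        have hAT : Aᵀ * A.adjugateᵀ = A.det • 1 := by
          rw [← transpose_mul, adjugate_mul, transpose_smul, transpose_one]
        rw [lyapunovMatrix, mul_add, add_mul, ← mul_assoc, hAT, mul_assoc, adjugate_mul]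
        simp only [Matrix.mul_smul, Matrix.mul_one, Matrix.smul_mul, Matrix.one_mul, smul_add]
        abel
    _ = (2 * A.trace * A.det) • 1 := by
        rw [hadj, hadjT, ← add_smul, smul_smul]
        ring_nf

lemma posDef_lyapunovMatrix {A : Mat2} (hA : 0 < A.det) : (lyapunovMatrix A).PosDef :=
  (PosDef.one.smul hA).add_posSemidef (posSemidef_conjTranspose_mul_self A.adjugate)

namespace IsHurwitz

variable {A : Mat2}

lemma exists_eigenvalues (hA : IsHurwitz A) :
    ∃ μ ν : ℂ, μ.re < 0 ∧ ν.re < 0 ∧ μ + ν = A.trace ∧ μ * ν = A.det := by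
  set B : Matrix (Fin 2) (Fin 2) ℂ := A.map (algebraMap ℝ ℂ)
  have hneg : ∀ μ ∈ B.charpoly.roots, μ.re < 0 := fun μ hμ =>
    hA μ (mem_spectrum_of_isRoot_charpoly (Polynomial.isRoot_of_mem_roots hμ))
  have hcard : B.charpoly.roots.card = 2 := by
    rw [← (IsAlgClosed.splits B.charpoly).natDegree_eq_card_roots, charpoly_natDegree_eq_dim,
      Fintype.card_fin]
  obtain ⟨μ, ν, hroots⟩ := Multiset.card_eq_two.1 hcard
  refine ⟨μ, ν, hneg μ (by simp [hroots]), hneg ν (by simp [hroots]), ?_, ?_⟩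
  · have htrace : B.trace = μ + ν := by simp [trace_eq_sum_roots_charpoly, hroots]
    rw [← htrace]
    exact (AddMonoidHom.map_trace (algebraMap ℝ ℂ) A).symm
  · have hdet : B.det = μ * ν := by simp [det_eq_prod_roots_charpoly, hroots]
    rw [← hdet]
    exact ((algebraMap ℝ ℂ).map_det A).symm

lemma trace_neg (hA : IsHurwitz A) : A.trace < 0 := by
  obtain ⟨μ, ν, hμ, hν, htrace, -⟩ := hA.exists_eigenvalues
  have hre := congrArg Complex.re htrace
  rw [Complex.add_re, Complex.ofReal_re] at hre
  linarith

lemma det_pos (hA : IsHurwitz A) : 0 < A.det := by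
  obtain ⟨μ, ν, hμ, hν, htrace, hdet⟩ := hA.exists_eigenvalues
  have him := congrArg Complex.im htrace
  have hre := congrArg Complex.re hdet
  rw [Complex.add_im, Complex.ofReal_im] at him
  rw [Complex.mul_re, Complex.ofReal_re, eq_neg_of_add_eq_zero_right him] at hre
  nlinarith [mul_pos_of_neg_of_neg hμ hν, mul_self_nonneg μ.im]

lemma exists_lyapunov_equation (hA : IsHurwitz A) :
    ∃ Pm : Mat2, Pm.PosDef ∧ ∃ γ : ℝ, 0 < γ ∧ Aᵀ * Pm + Pm * A = -γ • 1 := by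
  refine ⟨lyapunovMatrix A, posDef_lyapunovMatrix hA.det_pos, -(2 * A.trace * A.det), ?_, ?_⟩
  · have := mul_neg_of_neg_of_pos hA.trace_neg hA.det_pos
    linarith
  · rw [neg_neg, transpose_mul_lyapunovMatrix_add]

end IsHurwitz

lemma exists_dissipation_of_lyapunov_equation {m n : Type*} [Fintype m] [Fintype n]
    [DecidableEq n] {A Pm : Matrix n n ℝ} (hPm : Pm.IsSymm) {γ : ℝ} (hγ : 0 < γ)
    (hlyap : Aᵀ * Pm + Pm * A = -γ • 1) (G : Matrix n m ℝ) :
    ∃ β, 0 ≤ β ∧ ∀ (x : n → ℝ) (k : m → ℝ),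
      (A *ᵥ x + G *ᵥ k) ⬝ᵥ Pm *ᵥ x ≤ -(γ / 4) * (x ⬝ᵥ x) + β * (k ⬝ᵥ k) := by
  refine ⟨γ⁻¹ * frobeniusSq (Pm * G), mul_nonneg (by positivity) (frobeniusSq_nonneg _),
    fun x k => ?_⟩
  have hdrift : A *ᵥ x ⬝ᵥ Pm *ᵥ x = -(γ / 2) * (x ⬝ᵥ x) := by
    have htwo : A *ᵥ x ⬝ᵥ Pm *ᵥ x + x ⬝ᵥ Pm *ᵥ (A *ᵥ x) = -γ * (x ⬝ᵥ x) := by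
      have htranspose : A *ᵥ x ⬝ᵥ Pm *ᵥ x = x ⬝ᵥ Aᵀ *ᵥ (Pm *ᵥ x) := by
        rw [dotProduct_mulVec x, vecMul_transpose]
      rw [htranspose, mulVec_mulVec, mulVec_mulVec, ← dotProduct_add, ← add_mulVec, hlyap,
        smul_mulVec, one_mulVec, dotProduct_smul, smul_eq_mul]
    rw [dotProduct_mulVec_comm_of_isSymm hPm x] at htwo
    linarith
  have hcross : G *ᵥ k ⬝ᵥ Pm *ᵥ x ≤
      γ / 4 * (x ⬝ᵥ x) + γ⁻¹ * frobeniusSq (Pm * G) * (k ⬝ᵥ k) := by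
    rw [dotProduct_mulVec_comm_of_isSymm hPm, mulVec_mulVec]
    refine (dotProduct_le_mul_add_inv_mul (by positivity : 0 < γ / 4) x _).trans ?_
    rw [mul_div_cancel₀ γ four_ne_zero, mul_assoc γ⁻¹]
    gcongr
    exact mulVec_dotProduct_mulVec_le _ _
  rw [add_dotProduct]
  linarith

end LyapunovEquation

lemma exists_composite_lyapunov_decay {α γ c₁ c₂ : ℝ} (hα : 0 < α) (hγ : 0 < γ) (hc₁ : 0 < c₁)
    (hc₂ : 0 < c₂) (β : ℝ) :
    ∃ φ ρ : ℝ, 0 < φ ∧ 0 < ρ ∧ ∀ x z V W V' W' : ℝ, 0 ≤ x → 0 ≤ z → V ≤ c₁ * x → W ≤ c₂ * z →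
      V' ≤ -α * x + β * z → W' ≤ -γ * z → V' + φ * W' ≤ -ρ * (V + φ * W) := by
  have hφ : 0 < (|β| + 1) / γ := by positivity
  have hφγ : (|β| + 1) / γ * γ = |β| + 1 := div_mul_cancel₀ _ hγ.ne'
  set φ := (|β| + 1) / γ
  have hρ : 0 < min (α / c₁) (1 / (φ * c₂)) := by positivity
  have hρ₁ : min (α / c₁) (1 / (φ * c₂)) * c₁ ≤ α := (le_div_iff₀ hc₁).1 (min_le_left _ _)
  have hρ₂ : min (α / c₁) (1 / (φ * c₂)) * (φ * c₂) ≤ 1 :=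
    (le_div_iff₀ (by positivity)).1 (min_le_right _ _)
  set ρ := min (α / c₁) (1 / (φ * c₂))
  refine ⟨φ, ρ, hφ, hρ, fun x z V W V' W' hx hz hV hW hV' hW' => ?_⟩
  have hdecay : V' + φ * W' ≤ -(α * x + z) := by
    calc V' + φ * W' ≤ (-α * x + β * z) + φ * (-γ * z) := by gcongr
      _ = -α * x + β * z - φ * γ * z := by ring
      _ ≤ -(α * x + z) := by
        rw [hφγ]
        linarith [mul_le_mul_of_nonneg_right (le_abs_self β) hz]
  have hbound : ρ * (V + φ * W) ≤ α * x + z := by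
    calc ρ * (V + φ * W) ≤ ρ * (c₁ * x + φ * (c₂ * z)) := by gcongr
      _ = ρ * c₁ * x + ρ * (φ * c₂) * z := by ring
      _ ≤ α * x + 1 * z := by gcongr
      _ = α * x + z := by ring
  linarith

section ErrorDynamics

lemma continuous_pbar (a : ℝ) : Continuous (pbar a) := by
  unfold pbar
  fun_prop

namespace TireParams

variable (P : TireParams)

lemma continuous_K1 : Continuous P.K1 := by
  refine Continuous.matrix_diagonal (continuous_pi fun i => ?_)
  fin_cases i
  exacts [continuous_const.mul (continuous_pbar P.a1), continuous_const.mul (continuous_pbar P.a2)]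

lemma continuous_Q : Continuous P.Q :=
  P.continuous_K1.matrix_mul continuous_const

lemma isSymm_Q (ξ : ℝ) : (P.Q ξ).IsSymm := by
  rw [Q, K1, Hmat, ← diagonal_smul, inv_diagonal, diagonal_mul_diagonal]
  exact isSymm_diagonal _

end TireParams

variable {P : TireParams}

lemma Assumption2.integral_nonpos_of_continuousOn {S : Vec2 → Mat2} (hS : Assumption2 P S)
    (y : Vec2) {ζ : ℝ → Vec2} (hζ : ContinuousOn ζ (Icc 0 1)) :
    (∫ ξ in (0 : ℝ)..1, ζ ξ ⬝ᵥ P.Q ξ *ᵥ (S y *ᵥ (ζ ξ + P.K2op ζ))) ≤ 0 := by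
  set η : ℝ → Vec2 := fun ξ => ζ (projIcc 0 1 zero_le_one ξ)
  have hη : Continuous η :=
    hζ.comp_continuous (by fun_prop) fun ξ => (projIcc 0 1 zero_le_one ξ).2
  have hηζ : EqOn η ζ (uIcc 0 1) := fun ξ hξ => by
    rw [uIcc_of_le zero_le_one] at hξ
    simp only [η, projIcc_of_mem _ hξ]
  have hK2 : P.K2op η = P.K2op ζ :=
    intervalIntegral.integral_congr fun ξ hξ => by simp only [hηζ hξ]
  have hηsq : SqIntegrableOn01 η :=
    ⟨hη.measurable, (by fun_prop : Continuous fun ξ => ∑ i, η ξ i ^ 2).intervalIntegrable _ _⟩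
  have hint : (∫ ξ in (0 : ℝ)..1, η ξ ⬝ᵥ P.Q ξ *ᵥ (S y *ᵥ (η ξ + P.K2op η))) =
      ∫ ξ in (0 : ℝ)..1, ζ ξ ⬝ᵥ P.Q ξ *ᵥ (S y *ᵥ (ζ ξ + P.K2op ζ)) :=
    intervalIntegral.integral_congr fun ξ hξ => by simp only [hK2, hηζ hξ]
  exact hint ▸ hS y η hηsq

lemma integral_dotProduct_Q_mulVec_le {θ ω : ℝ} (hθ : 0 ≤ θ) {S : Vec2 → Mat2}
    (h1 : Assumption1 P ω) (h2 : Assumption2 P S) (y : Vec2) {ζ ζ' ζt : ℝ → Vec2}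
    (hζ : IsC1On01 ζ ζ') (h0 : ζ 0 = 0)
    (hpde : ∀ ξ ∈ Ioo (0 : ℝ) 1,
      ζt ξ + P.Λmat *ᵥ ζ' ξ = θ • S y *ᵥ (ζ ξ + P.K2op ζ) + P.K3op ζ) :
    (∫ ξ in (0 : ℝ)..1, ζt ξ ⬝ᵥ P.Q ξ *ᵥ ζ ξ) ≤ -ω * ∫ ξ in (0 : ℝ)..1, ζ ξ ⬝ᵥ ζ ξ := by
  have hcont : ContinuousOn ζ (Icc 0 1) := fun ξ hξ => (hζ.1 ξ hξ).continuousWithinAt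
  have hQ : ContinuousOn P.Q (Icc 0 1) := P.continuous_Q.continuousOn
  have hmulVec (M : Mat2) : Continuous (M *ᵥ ·) := by fun_prop
  have hA : IntervalIntegrable (fun ξ => P.Aop ζ ζ' ξ ⬝ᵥ P.Q ξ *ᵥ ζ ξ) volume 0 1 :=
    (continuousOn_dotProduct_mulVec
      (((hmulVec _).comp_continuousOn hζ.2).neg.add continuousOn_const)
      hQ hcont).intervalIntegrable_of_Icc zero_le_one
  have hsource : IntervalIntegrable
      (fun ξ => ζ ξ ⬝ᵥ P.Q ξ *ᵥ (S y *ᵥ (ζ ξ + P.K2op ζ))) volume 0 1 :=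
    (continuousOn_dotProduct_mulVec hcont hQ
      ((hmulVec _).comp_continuousOn (hcont.add continuousOn_const))).intervalIntegrable_of_Icc
      zero_le_one
  have hsplit : EqOn (fun ξ => ζt ξ ⬝ᵥ P.Q ξ *ᵥ ζ ξ)
      (fun ξ => P.Aop ζ ζ' ξ ⬝ᵥ P.Q ξ *ᵥ ζ ξ +
        θ * (ζ ξ ⬝ᵥ P.Q ξ *ᵥ (S y *ᵥ (ζ ξ + P.K2op ζ)))) (Ioo 0 1) := fun ξ hξ => by
    have hζt : ζt ξ = P.Aop ζ ζ' ξ + θ • S y *ᵥ (ζ ξ + P.K2op ζ) := by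
      rw [TireParams.Aop, eq_sub_of_add_eq (hpde ξ hξ)]
      abel
    simp only [hζt, add_dotProduct, smul_dotProduct, smul_eq_mul,
      dotProduct_mulVec_comm_of_isSymm (P.isSymm_Q ξ) (ζ ξ)]
  have hdissip : (∫ ξ in (0 : ℝ)..1, P.Aop ζ ζ' ξ ⬝ᵥ P.Q ξ *ᵥ ζ ξ) ≤
      -ω * ∫ ξ in (0 : ℝ)..1, ζ ξ ⬝ᵥ ζ ξ := by
    have hsq (x : Fin 2 → ℝ) : x ⬝ᵥ x = ∑ i, x i ^ 2 := by simp only [dotProduct, sq]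
    simpa only [hsq] using h1 ζ ζ' hζ h0
  rw [intervalIntegral.integral_congr_Ioo_of_le zero_le_one hsplit,
    intervalIntegral.integral_add hA (hsource.const_mul θ), intervalIntegral.integral_const_mul]
  linarith [mul_nonpos_of_nonneg_of_nonpos hθ (h2.integral_nonpos_of_continuousOn y hcont)]

namespace IsErrorPDESol

variable {θ T : ℝ} {S : Vec2 → Mat2} {v : ℝ → Vec2} {z zξ zt : ℝ → ℝ → Vec2} {t : ℝ}

lemma isC1On01 (hz : IsErrorPDESol P θ S T v z zξ zt) (ht : t ∈ Icc 0 T) :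
    IsC1On01 (fun ξ => z ξ t) (fun ξ => zξ ξ t) := by
  obtain ⟨hderiv, -, -, hcont, -⟩ := hz
  exact ⟨hderiv t ht, hcont.comp (f := fun ξ : ℝ => (ξ, t)) (by fun_prop) fun ξ hξ => ⟨hξ, ht⟩⟩

lemma continuousOn (hz : IsErrorPDESol P θ S T v z zξ zt) (ht : t ∈ Icc 0 T) :
    ContinuousOn (fun ξ => z ξ t) (Icc 0 1) :=
  fun ξ hξ => ((hz.isC1On01 ht).1 ξ hξ).continuousWithinAt

lemma hasDerivAt_energy (hz : IsErrorPDESol P θ S T v z zξ zt) (ht : t ∈ Ioo 0 T) :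
    HasDerivAt (fun τ => ∫ ξ in (0 : ℝ)..1, z ξ τ ⬝ᵥ P.Q ξ *ᵥ z ξ τ)
      (2 * ∫ ξ in (0 : ℝ)..1, zt ξ t ⬝ᵥ P.Q ξ *ᵥ z ξ t) t := by
  obtain ⟨-, hderiv, hcont, -, hcont', -⟩ := hz
  have hsub : uIcc (0 : ℝ) 1 ×ˢ Ioo 0 T ⊆ Icc 0 1 ×ˢ Icc 0 T := by
    rw [uIcc_of_le zero_le_one]
    exact prod_mono_right Ioo_subset_Icc_self
  refine hasDerivAt_integral_dotProduct_mulVec_self (Ioo_mem_nhds ht.1 ht.2)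
    P.continuous_Q.continuousOn (fun ξ _ => P.isSymm_Q ξ) (hcont.mono hsub)
    (hcont'.mono hsub) fun ξ hξ τ hτ => ?_
  rw [uIcc_of_le zero_le_one] at hξ
  exact (hderiv ξ hξ τ (Ioo_subset_Icc_self hτ)).hasDerivAt (Icc_mem_nhds hτ.1 hτ.2)

lemma energy_dissipation (hz : IsErrorPDESol P θ S T v z zξ zt) {ω : ℝ} (hθ : 0 ≤ θ)
    (h1 : Assumption1 P ω) (h2 : Assumption2 P S) (ht : t ∈ Ioo 0 T) :
    (∫ ξ in (0 : ℝ)..1, zt ξ t ⬝ᵥ P.Q ξ *ᵥ z ξ t) ≤ -ω * ∫ ξ in (0 : ℝ)..1, z ξ t ⬝ᵥ z ξ t := by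
  have htc := Ioo_subset_Icc_self ht
  have hC1 := hz.isC1On01 htc
  obtain ⟨-, -, -, -, -, hpde, hboundary⟩ := hz
  exact integral_dotProduct_Q_mulVec_le hθ h1 h2 (v t) hC1 (hboundary t htc)
    fun ξ hξ => hpde ξ hξ t ht

end IsErrorPDESol

end ErrorDynamics

theorem statement10_general (P : TireParams) (θ : ℝ) (hθ : 0 ≤ θ) (S : Vec2 → Mat2)
    (ω : ℝ) (hω : 0 < ω) (h1 : Assumption1 P ω) (h2 : Assumption2 P S)
    (G : Mat2) (Abar : Mat2) (hAbar : IsHurwitz Abar) :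
    ∃ (Pm : Mat2) (φc ρc : ℝ), Pm.PosDef ∧ 0 < φc ∧ 0 < ρc ∧
      ∀ (T : ℝ) (v Xe : ℝ → Vec2) (ze zeξ zet : ℝ → ℝ → Vec2),
        (∀ t ∈ Ioo (0 : ℝ) T,
          HasDerivAt Xe (Abar *ᵥ Xe t + G *ᵥ P.K1op (fun ξ => ze ξ t)) t) →
        IsErrorPDESol P θ S T v ze zeξ zet →
        ∀ t ∈ Ioo (0 : ℝ) T,
          ∃ d : ℝ,
            HasDerivAt (fun τ =>
              (1/2) * (Xe τ ⬝ᵥ Pm *ᵥ Xe τ) +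
                (φc/2) * ∫ ξ in (0 : ℝ)..1, ze ξ τ ⬝ᵥ P.Q ξ *ᵥ ze ξ τ) d t ∧
            d ≤ -ρc * ((1/2) * (Xe t ⬝ᵥ Pm *ᵥ Xe t) +
                (φc/2) * ∫ ξ in (0 : ℝ)..1, ze ξ t ⬝ᵥ P.Q ξ *ᵥ ze ξ t) := by
  obtain ⟨Pm, hPm, γ, hγ, hlyap⟩ := hAbar.exists_lyapunov_equation
  have hsymm : Pm.IsSymm := hPm.isHermitian
  obtain ⟨β, hβ, hX⟩ := exists_dissipation_of_lyapunov_equation hsymm hγ hlyap G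
  obtain ⟨M, hM⟩ := exists_integral_mulVec_dotProduct_self_le P.continuous_K1.continuousOn
  obtain ⟨c, hc, hQ⟩ := exists_integral_dotProduct_mulVec_self_le zero_le_one
    P.continuous_Q.continuousOn
  have hc₁ : 0 < 1 + frobeniusSq Pm := by linarith [frobeniusSq_nonneg Pm]
  obtain ⟨φ, ρ, hφ, hρ, hdecay⟩ :=
    exists_composite_lyapunov_decay (by positivity : 0 < γ / 4) hω hc₁ hc (β * M)
  refine ⟨Pm, φ, 2 * ρ, hPm, hφ, by positivity, fun T v Xe ze zeξ zet hode hpde t ht => ?_⟩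
  have hcont := hpde.continuousOn (Ioo_subset_Icc_self ht)
  refine ⟨_, ((hasDerivAt_dotProduct_mulVec_self hsymm (hode t ht)).const_mul (1 / 2)).add
    ((hpde.hasDerivAt_energy ht).const_mul (φ / 2)), ?_⟩
  have := hdecay _ _ _ _ _ _ (dotProduct_self_nonneg (Xe t))
    (intervalIntegral.integral_nonneg zero_le_one fun ξ _ => dotProduct_self_nonneg (ze ξ t))
    (dotProduct_mulVec_self_le Pm (Xe t)) (hQ _ hcont)
    ((hX (Xe t) (P.K1op fun ξ => ze ξ t)).trans ?_) (hpde.energy_dissipation hθ h1 h2 ht)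
  · linarith
  · rw [mul_assoc β]
    gcongr
    exact hM _ hcont

/-- Lyapunov function for the observer error dynamics: there exist `P ≻ 0`
symmetric and `φ, ρ > 0`, independent of the input, such that along every observer error
trajectory `V₀(t) = ½X̃ᵀPX̃ + (φ/2)∫₀¹ z̃ᵀQz̃` satisfies `V₀'(t) ≤ −ρV₀(t)`. -/
theorem statement10 (P : TireParams) (θ : ℝ) (hθ : 0 ≤ θ)
    (S : Vec2 → Mat2) (hS : Continuous S)
    (ω : ℝ) (hω : 0 < ω) (h1 : Assumption1 P ω) (h2 : Assumption2 P S)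
    (m Iz l1 l2 : ℝ) (hm : 0 < m) (hIz : 0 < Iz) (hl1 : 0 < l1) (hl2 : 0 < l2)
    (Abar : Mat2) (hAbar : IsHurwitz Abar) :
    ∃ (Pm : Mat2) (φc ρc : ℝ), Pm.PosDef ∧ 0 < φc ∧ 0 < ρc ∧
      ∀ T : ℝ, 0 < T →
      ∀ v : ℝ → Vec2, ContinuousOn v (Icc (0:ℝ) T) →
      ∀ (Xe : ℝ → Vec2) (ze zeξ zet : ℝ → ℝ → Vec2),
        (∀ t ∈ Ioo (0:ℝ) T,
          HasDerivAt Xe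
            (Abar.mulVec (Xe t) +
              (G1mat m Iz l1 l2).mulVec (P.K1op (fun ξ => ze ξ t))) t) →
        ContinuousOn Xe (Icc (0:ℝ) T) →
        IsErrorPDESol P θ S T v ze zeξ zet →
        ∀ t ∈ Ioo (0:ℝ) T,
          ∃ d : ℝ,
            HasDerivAt (fun τ =>
              (1/2) * (Xe τ ⬝ᵥ Pm.mulVec (Xe τ)) +
                (φc/2) * ∫ ξ in (0:ℝ)..1, ze ξ τ ⬝ᵥ (P.Q ξ).mulVec (ze ξ τ)) d t ∧
            d ≤ -ρc * ((1/2) * (Xe t ⬝ᵥ Pm.mulVec (Xe t)) +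
                (φc/2) * ∫ ξ in (0:ℝ)..1, ze ξ t ⬝ᵥ (P.Q ξ).mulVec (ze ξ t)) := by
  obtain ⟨Pm, φc, ρc, hPm, hφ, hρ, hV⟩ :=
    statement10_general P θ hθ S ω hω h1 h2 (G1mat m Iz l1 l2) Abar hAbar
  exact ⟨Pm, φc, ρc, hPm, hφ, hρ, fun T _ v _ Xe ze zeξ zet hode _ => hV T v Xe ze zeξ zet hode⟩
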